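/- arXiv:2603.26805 — 2 statements merged into one kernel-verified Lean document; each statement's English description precedes it below -/
import Mathlib

section
/- Let ν₁ > 0, g ≠ 0, (a,b) ∈ ℝ², and let f : ℝ → ℝ be differentiable. Define u(t,y) := f(t)·(−sin(y₂ − b), sin(y₁ − a)), ω(t,y) := f(t)·(cos(y₁ − a) + cos(y₂ − b)), and θ(t,y) := (1/g)·(f′(t) + ν₁ f(t))·(y₁·cos(y₂ − b) + sin(y₁ − a)). Then ω = ∂₁u₂ − ∂₂u₁ is the vorticity of u, the cellular flow transports its own vorticity trivially, u·∇ω ≡ 0, and the vorticity–buoyancy equation ∂ₜω + u·∇ω = ν₁Δω + g·∂₁θ holds at every (t,y) ∈ ℝ×ℝ². -/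
open MeasureTheory

/-- First partial derivative (in the first spatial variable) of a function on `ℝ²`. -/
noncomputable def pd1 (φ : ℝ × ℝ → ℝ) (y : ℝ × ℝ) : ℝ := deriv (fun s => φ (s, y.2)) y.1

/-- Second partial derivative (in the second spatial variable) of a function on `ℝ²`. -/
noncomputable def pd2 (φ : ℝ × ℝ → ℝ) (y : ℝ × ℝ) : ℝ := deriv (fun s => φ (y.1, s)) y.2

/-!
For a stream profile `φ` the velocity `f(t) (∂₂φ, -∂₁φ)` is tangent to the level sets of `φ` and has
vorticity `-f(t) Δφ`. If `Δφ = -μφ`, the vorticity is `μ f(t) φ`, so it is constant along the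
streamlines and the transport term vanishes. Diffusion then only multiplies the vorticity by `-νμ`,
and what remains of the equation is `μ (f' + νμf) φ = g ∂₁θ`, solved by integrating `φ` in the first
variable. The cellular flow is the case `φ = cos (y₁ - a) + cos (y₂ - b)`, `μ = 1`.
-/

/-- `φ` has the classical partial derivative `φ₁` in the first variable everywhere. Unlike the
equation `pd1 φ = φ₁`, this asserts that the derivative exists. -/
def HasPd1 (φ φ₁ : ℝ × ℝ → ℝ) : Prop :=
  ∀ y : ℝ × ℝ, HasDerivAt (fun s => φ (s, y.2)) (φ₁ y) y.1

/-- `φ` has the classical partial derivative `φ₂` in the second variable everywhere. Unlike the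
equation `pd2 φ = φ₂`, this asserts that the derivative exists. -/
def HasPd2 (φ φ₂ : ℝ × ℝ → ℝ) : Prop :=
  ∀ y : ℝ × ℝ, HasDerivAt (fun s => φ (y.1, s)) (φ₂ y) y.2

section StreamProfile

variable {φ φ₁ φ₂ φ₁₁ φ₂₂ : ℝ × ℝ → ℝ}

theorem HasPd1.pd1_eq (h : HasPd1 φ φ₁) : pd1 φ = φ₁ :=
  funext fun y => (h y).deriv

theorem HasPd2.pd2_eq (h : HasPd2 φ φ₂) : pd2 φ = φ₂ :=
  funext fun y => (h y).deriv

theorem HasPd1.const_mul (c : ℝ) (h : HasPd1 φ φ₁) :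
    HasPd1 (fun y => c * φ y) (fun y => c * φ₁ y) :=
  fun y => (h y).const_mul c

theorem HasPd2.const_mul (c : ℝ) (h : HasPd2 φ φ₂) :
    HasPd2 (fun y => c * φ y) (fun y => c * φ₂ y) :=
  fun y => (h y).const_mul c

theorem vorticity_const_mul_perp_gradient (c : ℝ) (h₁₁ : HasPd1 φ₁ φ₁₁) (h₂₂ : HasPd2 φ₂ φ₂₂)
    (y : ℝ × ℝ) :
    pd1 (fun z => -c * φ₁ z) y - pd2 (fun z => c * φ₂ z) y = -c * (φ₁₁ y + φ₂₂ y) := by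
  rw [(h₁₁.const_mul (-c)).pd1_eq, (h₂₂.const_mul c).pd2_eq]
  ring

theorem perp_gradient_advection_eq_zero (c d : ℝ) (h₁ : HasPd1 φ φ₁) (h₂ : HasPd2 φ φ₂)
    (y : ℝ × ℝ) :
    c * φ₂ y * pd1 (fun z => d * φ z) y + -c * φ₁ y * pd2 (fun z => d * φ z) y = 0 := by
  rw [(h₁.const_mul d).pd1_eq, (h₂.const_mul d).pd2_eq]
  ring

theorem laplacian_const_mul (c : ℝ) (h₁ : HasPd1 φ φ₁) (h₂ : HasPd2 φ φ₂)
    (h₁₁ : HasPd1 φ₁ φ₁₁) (h₂₂ : HasPd2 φ₂ φ₂₂) (y : ℝ × ℝ) :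
    pd1 (pd1 fun z => c * φ z) y + pd2 (pd2 fun z => c * φ z) y = c * (φ₁₁ y + φ₂₂ y) := by
  rw [(h₁.const_mul c).pd1_eq, (h₂.const_mul c).pd2_eq, (h₁₁.const_mul c).pd1_eq,
    (h₂₂.const_mul c).pd2_eq]
  ring

theorem cellular_flow_vorticity_equation_general {Φ : ℝ × ℝ → ℝ} {f f' : ℝ → ℝ} {μ ν g : ℝ}
    {u : ℝ → ℝ × ℝ → ℝ × ℝ} {ω θ : ℝ → ℝ × ℝ → ℝ}
    (h₁ : HasPd1 φ φ₁) (h₂ : HasPd2 φ φ₂) (h₁₁ : HasPd1 φ₁ φ₁₁) (h₂₂ : HasPd2 φ₂ φ₂₂)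
    (hΔ : ∀ y, φ₁₁ y + φ₂₂ y = -μ * φ y) (hΦ : HasPd1 Φ φ)
    (hf : ∀ t, HasDerivAt f (f' t) t) (hg : g ≠ 0)
    (hu : ∀ t y, u t y = (f t * φ₂ y, -f t * φ₁ y))
    (hω : ∀ t y, ω t y = μ * f t * φ y)
    (hθ : ∀ t y, θ t y = (1 / g) * (μ * (f' t + ν * μ * f t)) * Φ y) :
    (∀ t y, ω t y = pd1 (fun z => (u t z).2) y - pd2 (fun z => (u t z).1) y) ∧
    (∀ t y, (u t y).1 * pd1 (ω t) y + (u t y).2 * pd2 (ω t) y = 0) ∧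
    (∀ t y, deriv (fun s => ω s y) t
        + ((u t y).1 * pd1 (ω t) y + (u t y).2 * pd2 (ω t) y)
        = ν * (pd1 (pd1 (ω t)) y + pd2 (pd2 (ω t)) y) + g * pd1 (θ t) y) := by
  have hω_fun (t : ℝ) : ω t = fun y => μ * f t * φ y := funext (hω t)
  have hθ_fun (t : ℝ) : θ t = fun y => (1 / g) * (μ * (f' t + ν * μ * f t)) * Φ y := funext (hθ t)
  have advection (t : ℝ) (y : ℝ × ℝ) :
      (u t y).1 * pd1 (ω t) y + (u t y).2 * pd2 (ω t) y = 0 := by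
    rw [hu, hω_fun]
    exact perp_gradient_advection_eq_zero _ _ h₁ h₂ y
  have time_deriv (t : ℝ) (y : ℝ × ℝ) : deriv (fun s => ω s y) t = μ * f' t * φ y := by
    simp only [hω]
    exact (((hf t).const_mul μ).mul_const (φ y)).deriv
  refine ⟨fun t y => ?_, advection, fun t y => ?_⟩
  · simp only [hu]
    rw [vorticity_const_mul_perp_gradient _ h₁₁ h₂₂, hΔ, hω]
    ring
  · rw [advection, time_deriv, hω_fun, laplacian_const_mul _ h₁ h₂ h₁₁ h₂₂, hΔ, hθ_fun,
      (hΦ.const_mul _).pd1_eq]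
    field_simp
    ring

end StreamProfile

theorem hasDerivAt_sin_sub_const (c x : ℝ) :
    HasDerivAt (fun s => Real.sin (s - c)) (Real.cos (x - c)) x :=
  (Real.hasDerivAt_sin (x - c)).comp_sub_const x c

theorem hasDerivAt_cos_sub_const (c x : ℝ) :
    HasDerivAt (fun s => Real.cos (s - c)) (-Real.sin (x - c)) x :=
  (Real.hasDerivAt_cos (x - c)).comp_sub_const x c

/-- The stream profile of the rotational cellular flow centred at `(a, b)`, an eigenfunction of the
Laplacian with eigenvalue `-1`. -/
noncomputable def cellularProfile (a b : ℝ) (y : ℝ × ℝ) : ℝ :=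
  Real.cos (y.1 - a) + Real.cos (y.2 - b)

section CellularProfile

variable (a b : ℝ)

theorem hasPd1_cellularProfile :
    HasPd1 (cellularProfile a b) (fun y => -Real.sin (y.1 - a)) :=
  fun y => (hasDerivAt_cos_sub_const a y.1).add_const (Real.cos (y.2 - b))

theorem hasPd2_cellularProfile :
    HasPd2 (cellularProfile a b) (fun y => -Real.sin (y.2 - b)) :=
  fun y => (hasDerivAt_cos_sub_const b y.2).const_add (Real.cos (y.1 - a))

theorem hasPd1_neg_sin_fst_sub :
    HasPd1 (fun y => -Real.sin (y.1 - a)) (fun y => -Real.cos (y.1 - a)) :=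
  fun y => (hasDerivAt_sin_sub_const a y.1).fun_neg

theorem hasPd2_neg_sin_snd_sub :
    HasPd2 (fun y => -Real.sin (y.2 - b)) (fun y => -Real.cos (y.2 - b)) :=
  fun y => (hasDerivAt_sin_sub_const b y.2).fun_neg

theorem hasPd1_cellularProfile_primitive :
    HasPd1 (fun y => y.1 * Real.cos (y.2 - b) + Real.sin (y.1 - a)) (cellularProfile a b) := by
  intro y
  simpa only [cellularProfile, one_mul, add_comm] using
    ((hasDerivAt_id' y.1).mul_const (Real.cos (y.2 - b))).fun_add (hasDerivAt_sin_sub_const a y.1)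

end CellularProfile

/-- The rotational cellular flow solves the unforced vorticity–buoyancy equation
`∂ₜω + u·∇ω = ν₁Δω + g∂₁θ`, with vanishing transport term `u·∇ω ≡ 0`. -/
theorem cellular_flow_vorticity_equation
    (ν₁ g a b : ℝ) (hν₁ : 0 < ν₁) (hg : g ≠ 0)
    (f : ℝ → ℝ) (hf : Differentiable ℝ f)
    (u : ℝ → ℝ × ℝ → ℝ × ℝ) (ω θ : ℝ → ℝ × ℝ → ℝ)
    (hu : ∀ t y, u t y = (-(f t * Real.sin (y.2 - b)), f t * Real.sin (y.1 - a)))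
    (hω : ∀ t y, ω t y = f t * (Real.cos (y.1 - a) + Real.cos (y.2 - b)))
    (hθ : ∀ t y, θ t y = (1 / g) * (deriv f t + ν₁ * f t)
        * (y.1 * Real.cos (y.2 - b) + Real.sin (y.1 - a))) :
    (∀ t y, ω t y = pd1 (fun z => (u t z).2) y - pd2 (fun z => (u t z).1) y) ∧
    (∀ t y, (u t y).1 * pd1 (ω t) y + (u t y).2 * pd2 (ω t) y = 0) ∧
    (∀ t y, deriv (fun s => ω s y) t
        + ((u t y).1 * pd1 (ω t) y + (u t y).2 * pd2 (ω t) y)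
        = ν₁ * (pd1 (pd1 (ω t)) y + pd2 (pd2 (ω t)) y) + g * pd1 (θ t) y) :=
  cellular_flow_vorticity_equation_general (μ := 1)
    (hasPd1_cellularProfile a b) (hasPd2_cellularProfile a b)
    (hasPd1_neg_sin_fst_sub a) (hasPd2_neg_sin_snd_sub b)
    (fun y => by rw [cellularProfile]; ring) (hasPd1_cellularProfile_primitive a b)
    (fun t => (hf t).hasDerivAt) hg
    (fun t y => by rw [hu, mul_neg, neg_mul_neg])
    (fun t y => by rw [hω, one_mul, cellularProfile])
    (fun t y => by rw [hθ, one_mul, mul_one])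
end

section
/- Let ν₁, ν₂ > 0, g ≠ 0, (a,b) ∈ ℝ², and let f : ℝ → ℝ be twice differentiable. With u(t,y) := f(t)·(−sin(y₂ − b), sin(y₁ − a)) and θ(t,y) := (1/g)·(f′(t) + ν₁ f(t))·(y₁·cos(y₂ − b) + sin(y₁ − a)), one has at every (t,y) ∈ ℝ×ℝ²: ∂ₜθ + u·∇θ − ν₂Δθ = (1/g)·[ (f″(t) + ν₁ f′(t))·(y₁·cos(y₂ − b) + sin(y₁ − a)) + ν₂·(f′(t) + ν₁ f(t))·(y₁·cos(y₂ − b) + sin(y₁ − a)) − f(t)·(f′(t) + ν₁ f(t))·( sin(y₂ − b)·cos(y₂ − b) + sin(y₂ − b)·cos(y₁ − a) + y₁·sin(y₁ − a)·sin(y₂ − b) ) ]. Hence θ solves the forced temperature equation ∂ₜθ + u·∇θ = ν₂Δθ + h with this explicit smooth forcing h. -/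
open MeasureTheory

/-!
Both `y₁ cos (y₂ - b)` and `sin (y₁ - a)` are eigenfunctions of the Laplacian with eigenvalue `-1`,
so diffusion with coefficient `κ` acts on `θ = c(t) T(y)` as multiplication by `-κ`. The time
derivative only sees the amplitude `c`, and the quadratic terms of the forcing come from advecting
the fixed profile `T` by the fixed cellular velocity profile.
-/

section PlanarOperators

/-- The advection term `v · ∇φ` of a scalar `φ` along a planar vector field `v`. -/
noncomputable def advection (v : ℝ × ℝ → ℝ × ℝ) (φ : ℝ × ℝ → ℝ) (y : ℝ × ℝ) : ℝ :=
  (v y).1 * pd1 φ y + (v y).2 * pd2 φ y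

/-- The Laplacian `∂₁₁φ + ∂₂₂φ` on `ℝ²`, built from iterated coordinate derivatives. -/
noncomputable def planarLaplacian (φ : ℝ × ℝ → ℝ) (y : ℝ × ℝ) : ℝ :=
  pd1 (pd1 φ) y + pd2 (pd2 φ) y

variable (r c : ℝ) (v : ℝ × ℝ → ℝ × ℝ) (φ : ℝ × ℝ → ℝ)

theorem pd1_const_smul : pd1 (c • φ) = c • pd1 φ :=
  funext fun _ => deriv_const_mul_field c

theorem pd2_const_smul : pd2 (c • φ) = c • pd2 φ :=
  funext fun _ => deriv_const_mul_field c

theorem advection_smul_smul : advection (r • v) (c • φ) = (r * c) • advection v φ := by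
  ext y
  simp only [advection, pd1_const_smul, pd2_const_smul, Pi.smul_apply, Prod.smul_fst,
    Prod.smul_snd, smul_eq_mul]
  ring

theorem planarLaplacian_const_smul : planarLaplacian (c • φ) = c • planarLaplacian φ := by
  ext y
  simp only [planarLaplacian, pd1_const_smul, pd2_const_smul, Pi.smul_apply, smul_eq_mul]
  ring

end PlanarOperators

section CellularProfiles

open Real

/-- The velocity profile of the rotational cellular flow centred at `(a, b)`, with the time
amplitude factored out. -/
noncomputable def cellularVelocity (a b : ℝ) (y : ℝ × ℝ) : ℝ × ℝ :=
  (-sin (y.2 - b), sin (y.1 - a))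

/-- The temperature profile of the rotational cellular flow, with the time amplitude factored
out. Its first partial derivative is the vorticity of `cellularVelocity a b`, so that buoyancy can
drive the flow. -/
noncomputable def cellularTemperature (a b : ℝ) (y : ℝ × ℝ) : ℝ :=
  y.1 * cos (y.2 - b) + sin (y.1 - a)

variable (a b : ℝ)

theorem pd1_cellularTemperature :
    pd1 (cellularTemperature a b) = fun y => cos (y.2 - b) + cos (y.1 - a) := by
  ext y
  have h := ((hasDerivAt_id' y.1).mul_const (cos (y.2 - b))).add
    ((hasDerivAt_id' y.1).sub_const a).sin
  exact h.deriv.trans (by ring)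

theorem pd2_cellularTemperature :
    pd2 (cellularTemperature a b) = fun y => -(y.1 * sin (y.2 - b)) := by
  ext y
  have h := (((hasDerivAt_id' y.2).sub_const b).cos.const_mul y.1).add_const (sin (y.1 - a))
  exact h.deriv.trans (by ring)

theorem planarLaplacian_cellularTemperature :
    planarLaplacian (cellularTemperature a b) = -cellularTemperature a b := by
  ext y
  have h₁₁ : pd1 (pd1 (cellularTemperature a b)) y = -sin (y.1 - a) := by
    rw [pd1_cellularTemperature]
    have h := ((hasDerivAt_id' y.1).sub_const a).cos.const_add (cos (y.2 - b))
    exact h.deriv.trans (by ring)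
  have h₂₂ : pd2 (pd2 (cellularTemperature a b)) y = -(y.1 * cos (y.2 - b)) := by
    rw [pd2_cellularTemperature]
    have h := (((hasDerivAt_id' y.2).sub_const b).sin.const_mul y.1).neg
    exact h.deriv.trans (by ring)
  rw [planarLaplacian, h₁₁, h₂₂, Pi.neg_apply, cellularTemperature]
  ring

theorem advection_cellularVelocity_cellularTemperature (y : ℝ × ℝ) :
    advection (cellularVelocity a b) (cellularTemperature a b) y =
      -(sin (y.2 - b) * cos (y.2 - b) + sin (y.2 - b) * cos (y.1 - a)
        + y.1 * sin (y.1 - a) * sin (y.2 - b)) := by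
  rw [advection, pd1_cellularTemperature, pd2_cellularTemperature, cellularVelocity]
  ring

theorem cellular_flow_temperature_forcing_general (κ : ℝ) {F c : ℝ → ℝ} {c' t : ℝ}
    {u : ℝ → ℝ × ℝ → ℝ × ℝ} {θ : ℝ → ℝ × ℝ → ℝ} (hc : HasDerivAt c c' t)
    (hu : ∀ t y, u t y = (-(F t * sin (y.2 - b)), F t * sin (y.1 - a)))
    (hθ : ∀ t y, θ t y = c t * (y.1 * cos (y.2 - b) + sin (y.1 - a))) (y : ℝ × ℝ) :
    deriv (fun s => θ s y) t
        + ((u t y).1 * pd1 (θ t) y + (u t y).2 * pd2 (θ t) y)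
        - κ * (pd1 (pd1 (θ t)) y + pd2 (pd2 (θ t)) y)
      = (c' + κ * c t) * (y.1 * cos (y.2 - b) + sin (y.1 - a))
        - F t * c t * (sin (y.2 - b) * cos (y.2 - b) + sin (y.2 - b) * cos (y.1 - a)
          + y.1 * sin (y.1 - a) * sin (y.2 - b)) := by
  have h_velocity : u t = F t • cellularVelocity a b := by
    ext z <;> simp [hu, cellularVelocity]
  have h_temperature (s : ℝ) : θ s = c s • cellularTemperature a b := funext (hθ s)
  have h_time : deriv (fun s => θ s y) t = c' * cellularTemperature a b y := by
    simpa only [h_temperature, Pi.smul_apply, smul_eq_mul] using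
      (hc.mul_const (cellularTemperature a b y)).deriv
  have h_advection : advection (u t) (θ t) y =
      F t * c t * advection (cellularVelocity a b) (cellularTemperature a b) y := by
    rw [h_velocity, h_temperature, advection_smul_smul, Pi.smul_apply, smul_eq_mul]
  have h_diffusion : planarLaplacian (θ t) y = -(c t * cellularTemperature a b y) := by
    rw [h_temperature, planarLaplacian_const_smul, planarLaplacian_cellularTemperature,
      smul_neg, Pi.neg_apply, Pi.smul_apply, smul_eq_mul]
  rw [← advection, ← planarLaplacian, h_time, h_advection, h_diffusion,
    advection_cellularVelocity_cellularTemperature, cellularTemperature]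
  ring

end CellularProfiles

/-- The temperature profile of the rotational cellular flow solves the forced temperature
equation `∂ₜθ + u·∇θ = ν₂Δθ + h` with the explicit smooth forcing `h` on the right-hand side. -/
theorem cellular_flow_temperature_forcing
    (ν₁ ν₂ g a b : ℝ) (hν₁ : 0 < ν₁) (hν₂ : 0 < ν₂) (hg : g ≠ 0)
    (f : ℝ → ℝ) (hf : Differentiable ℝ f) (hf' : Differentiable ℝ (deriv f))
    (u : ℝ → ℝ × ℝ → ℝ × ℝ) (θ : ℝ → ℝ × ℝ → ℝ)
    (hu : ∀ t y, u t y = (-(f t * Real.sin (y.2 - b)), f t * Real.sin (y.1 - a)))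
    (hθ : ∀ t y, θ t y = (1 / g) * (deriv f t + ν₁ * f t)
        * (y.1 * Real.cos (y.2 - b) + Real.sin (y.1 - a))) :
    ∀ t y, deriv (fun s => θ s y) t
        + ((u t y).1 * pd1 (θ t) y + (u t y).2 * pd2 (θ t) y)
        - ν₂ * (pd1 (pd1 (θ t)) y + pd2 (pd2 (θ t)) y)
      = (1 / g) * ((deriv (deriv f) t + ν₁ * deriv f t)
            * (y.1 * Real.cos (y.2 - b) + Real.sin (y.1 - a))
          + ν₂ * (deriv f t + ν₁ * f t)
            * (y.1 * Real.cos (y.2 - b) + Real.sin (y.1 - a))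
          - f t * (deriv f t + ν₁ * f t)
            * (Real.sin (y.2 - b) * Real.cos (y.2 - b)
              + Real.sin (y.2 - b) * Real.cos (y.1 - a)
              + y.1 * Real.sin (y.1 - a) * Real.sin (y.2 - b))) := by
  intro t y
  have h_amplitude :=
    ((hf' t).hasDerivAt.fun_add ((hf t).hasDerivAt.const_mul ν₁)).const_mul (1 / g)
  linear_combination cellular_flow_temperature_forcing_general a b ν₂ h_amplitude hu hθ y
end
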